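/- The alternative classifier f_B of Assumption 1 has defended 0–1 risk R(x ↦ sgn(f_B(x))) = ε; in particular, R(x ↦ sgn(f_B(x))) = R(x ↦ sgn(f_S(x))), so the defended risk does not distinguish f_B from f_S. -/

import Mathlib

open MeasureTheory ENNReal

/-- The sign function: `sgn u = 1` if `u ≥ 0`, and `-1` otherwise. -/
noncomputable def sgn (u : ℝ) : ℝ := if 0 ≤ u then 1 else -1

/-- The defended 0–1 risk of a classifier `h` against the server's classifier `fS`
protected by the symmetric-Bernoulli defense on the set `S`:
`R(h) = ∫_{X\S} 1{h ≠ sgn fS} dQ + (1/2) ∫_S (1{h ≠ sgn fS} + 1{h ≠ -sgn fS}) dQ`. -/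
noncomputable def defendedRisk {X : Type*} [MeasurableSpace X] (Q : Measure X)
    (S : Set X) (fS : X → ℝ) (h : X → ℝ) : ℝ≥0∞ :=
  (∫⁻ x in Sᶜ, (if h x ≠ sgn (fS x) then (1 : ℝ≥0∞) else 0) ∂Q)
    + (1 / 2) * ∫⁻ x in S,
        ((if h x ≠ sgn (fS x) then (1 : ℝ≥0∞) else 0)
          + (if h x ≠ -sgn (fS x) then (1 : ℝ≥0∞) else 0)) ∂Q

theorem sgn_eq_one_or_neg_one (u : ℝ) : sgn u = 1 ∨ sgn u = -1 :=
  ite_eq_or_eq _ _ _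

theorem sgn_ne_zero (u : ℝ) : sgn u ≠ 0 := by
  rcases sgn_eq_one_or_neg_one u with hu | hu <;> simp [hu]

theorem sgn_eq_or_eq_neg_sgn (u v : ℝ) : sgn u = sgn v ∨ sgn u = -sgn v := by
  rcases sgn_eq_one_or_neg_one u with hu | hu <;>
    rcases sgn_eq_one_or_neg_one v with hv | hv <;> simp [hu, hv]

theorem ite_sgn_ne_sgn_add_ite_sgn_ne_neg_sgn {R : Type*} [AddMonoidWithOne R] (u v : ℝ) :
    (if sgn u ≠ sgn v then (1 : R) else 0) + (if sgn u ≠ -sgn v then (1 : R) else 0) = 1 := by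
  have hv : sgn v ≠ -sgn v := self_ne_neg.mpr (sgn_ne_zero v)
  rcases sgn_eq_or_eq_neg_sgn u v with h | h
  · simp [h, hv]
  · simp [h, hv.symm]

section DefendedRisk

variable {X : Type*} [MeasurableSpace X]

-- On `S` every sign classifier disagrees with exactly one of the two equiprobable labels, so the
-- risk there is `Q S / 2` whatever `f` is.
theorem defendedRisk_sgn (Q : Measure X) (S : Set X) (fS f : X → ℝ) :
    defendedRisk Q S fS (fun x => sgn (f x)) =
      (∫⁻ x in Sᶜ, (if sgn (f x) ≠ sgn (fS x) then (1 : ℝ≥0∞) else 0) ∂Q) + Q S / 2 := by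
  simp only [defendedRisk, ite_sgn_ne_sgn_add_ite_sgn_ne_neg_sgn, setLIntegral_one, one_div,
    ENNReal.div_eq_inv_mul]

variable {Q : Measure X} {S : Set X} {fS f : X → ℝ}

theorem defendedRisk_sgn_eq_measure_div_two (hS : NullMeasurableSet S Q)
    (hf : ∀ x ∉ S, sgn (f x) = sgn (fS x)) :
    defendedRisk Q S fS (fun x => sgn (f x)) = Q S / 2 := by
  have disagreement_eq_zero :
      (∫⁻ x in Sᶜ, (if sgn (f x) ≠ sgn (fS x) then (1 : ℝ≥0∞) else 0) ∂Q) = 0 := by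
    refine lintegral_eq_zero_of_ae_eq_zero ?_
    filter_upwards [ae_restrict_mem₀ hS.compl] with x hx
    exact if_neg (not_not.mpr (hf x hx))
  rw [defendedRisk_sgn, disagreement_eq_zero, zero_add]

theorem defendedRisk_fB_eq_general (hS : NullMeasurableSet S Q)
    (hf : ∀ x ∉ S, sgn (f x) = sgn (fS x)) :
    defendedRisk Q S fS (fun x => sgn (f x)) = Q S / 2 ∧
      defendedRisk Q S fS (fun x => sgn (f x)) = defendedRisk Q S fS (fun x => sgn (fS x)) := by
  have risk_f := defendedRisk_sgn_eq_measure_div_two hS hf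
  have risk_fS := defendedRisk_sgn_eq_measure_div_two (fS := fS) hS fun _ _ => rfl
  exact ⟨risk_f, risk_f.trans risk_fS.symm⟩

end DefendedRisk

/-- The alternative classifier `f_B` of Assumption 1 has defended 0–1 risk
`R(x ↦ sgn(f_B(x))) = ε`; in particular it equals the defended risk of the
server's own classifier, so the defended risk does not distinguish `f_B` from `f_S`. -/
theorem defendedRisk_fB_eq {X : Type*} [MeasurableSpace X]
    (Q : Measure X) [IsProbabilityMeasure Q]
    (fS : X → ℝ) (hfS : Measurable fS)
    (S : Set X) (hS : MeasurableSet S)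
    (ε : ℝ) (hε : ε ∈ Set.Ioo (0 : ℝ) (1 / 2))
    (hQS : Q S = ENNReal.ofReal (2 * ε))
    (fB : X → ℝ) (hfB : Measurable fB)
    (hB_in : ∀ x ∈ S, sgn (fB x) = -sgn (fS x))
    (hB_out : ∀ x ∉ S, sgn (fB x) = sgn (fS x)) :
    defendedRisk Q S fS (fun x => sgn (fB x)) = ENNReal.ofReal ε ∧
      defendedRisk Q S fS (fun x => sgn (fB x))
        = defendedRisk Q S fS (fun x => sgn (fS x)) := by
  have hε_half : Q S / 2 = ENNReal.ofReal ε := by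
    rw [hQS, ← ENNReal.ofReal_ofNat 2, ← ENNReal.ofReal_div_of_pos two_pos,
      mul_div_cancel_left₀ ε two_ne_zero]
  exact hε_half ▸ defendedRisk_fB_eq_general hS.nullMeasurableSet hB_out
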